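/- Let b ≥ 2 be an integer, let h and N be positive integers with N ≥ h, and let ε > 0 be real. Then for all integers M ≥ 0 and a with 0 ≤ a < b^h, for any subinterval A of [0,1] and any positive integer j_0, μ({x ∈ A : F(M + j_0, N, a·b^{−h}, (a+1)·b^{−h}, ({b^j x})_{j≥0}) > ε·√(hN)}) ≤ 2·μ(A)·h·exp(−ε² / (2·b^{−h}(1 − b^{−h}) + (2/3)·ε·⌊N/h⌋^{−1/2})) + 2·b^{−j_0}. -/

import Mathlib

open scoped Classical

/-- `F M N α₁ α₂ x = |#{j : M ≤ j < M+N, α₁ ≤ x_j < α₂} − (α₂ − α₁)·N|`. -/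
noncomputable def F (M N : ℕ) (α₁ α₂ : ℝ) (x : ℕ → ℝ) : ℝ :=
  |(((Finset.Ico M (M + N)).filter fun j => α₁ ≤ x j ∧ x j < α₂).card : ℝ) -
    (α₂ - α₁) * N|

/-- The sequence `({b^j x})_{j ≥ 0}` of fractional parts. -/
noncomputable def bseq (b : ℕ) (x : ℝ) : ℕ → ℝ := fun j => Int.fract ((b : ℝ) ^ j * x)

/-!
For `B = b ^ h` the base-`B` digits of a uniform `x` are independent. Splitting the times
`M + j₀ + j`, `j < N`, by the residue of `j` modulo `h` writes the discrepancy as a sum of `h`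
sums `Sᵢ` of independent centered indicators of digits, with `nᵢ ≥ ⌊N / h⌋` terms each. Since
`∑ √nᵢ ≤ √(h * N)` by Cauchy–Schwarz, a discrepancy above `ε * √(h * N)` forces
`ε * √nᵢ ≤ |Sᵢ|` for some `i`, and Bernstein's inequality bounds each of these `h` events. The
exceptional set has period `b ^ (-j₀)`, so an interval meets it in at most its density times the
length of the interval plus one period.
-/

open MeasureTheory ProbabilityTheory Set

section Bernstein

lemma three_sub_mul_exp_le (y : ℝ) : (3 - y) * Real.exp y ≤ 3 + 2 * y + y ^ 2 / 2 := by
  -- `f` is convex with `f 0 = f' 0 = 0`, hence nonnegative.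
  let f : ℝ → ℝ := fun y => (3 + 2 * y + y ^ 2 / 2) * Real.exp (-y) + y - 3
  have hexp (y : ℝ) : HasDerivAt (fun y => Real.exp (-y)) (-Real.exp (-y)) y := by
    simpa using (hasDerivAt_id y).neg.exp
  have hf (y : ℝ) : HasDerivAt f (1 - (1 + y + y ^ 2 / 2) * Real.exp (-y)) y := by
    have hpoly : HasDerivAt (fun y : ℝ => 3 + 2 * y + y ^ 2 / 2) (2 + y) y :=
      ((((hasDerivAt_id y).const_mul 2).const_add 3).add
        (((hasDerivAt_id y).pow 2).div_const 2)).congr_deriv (by simp)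
    exact (((hpoly.mul (hexp y)).add (hasDerivAt_id y)).sub_const 3).congr_deriv (by ring)
  have hf' (y : ℝ) : HasDerivAt (deriv f) (y ^ 2 / 2 * Real.exp (-y)) y := by
    have hpoly : HasDerivAt (fun y : ℝ => 1 + y + y ^ 2 / 2) (1 + y) y :=
      (((hasDerivAt_id y).const_add 1).add
        (((hasDerivAt_id y).pow 2).div_const 2)).congr_deriv (by simp)
    rw [funext fun y => (hf y).deriv]
    exact ((hpoly.mul (hexp y)).const_sub 1).congr_deriv (by ring)
  have hconvex : ConvexOn ℝ univ f :=
    convexOn_univ_of_deriv2_nonneg (fun y => (hf y).differentiableAt)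
      (fun y => (hf' y).differentiableAt)
      fun y => by rw [Function.iterate_succ_apply, Function.iterate_one, (hf' y).deriv]; positivity
  have hmin : IsMinOn f univ 0 := hconvex.isMinOn_of_rightDeriv_eq_zero (by simp) <| by
    simpa using (hf 0).hasDerivWithinAt.derivWithin (uniqueDiffWithinAt_Ioi 0)
  have hfy : 0 ≤ f y := by simpa [f] using hmin (mem_univ y)
  have hcancel : Real.exp (-y) * Real.exp y = 1 := by rw [← Real.exp_add]; simp
  have hfactor : 3 + 2 * y + y ^ 2 / 2 - (3 - y) * Real.exp y = f y * Real.exp y := by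
    linear_combination (-(3 + 2 * y + y ^ 2 / 2)) * hcancel
  exact sub_nonneg.1 (hfactor ▸ by positivity)

lemma exp_le_one_add_add_sq_div {y l : ℝ} (hl : l < 3) (hyl : y ≤ l) :
    Real.exp y ≤ 1 + y + y ^ 2 / (2 * (1 - l / 3)) := by
  have hy : 0 < 3 - y := by linarith
  calc Real.exp y ≤ (3 + 2 * y + y ^ 2 / 2) / (3 - y) := by
        rw [le_div_iff₀ hy, mul_comm]; exact three_sub_mul_exp_le y
    _ = 1 + y + y ^ 2 / (2 * (1 - y / 3)) := by
        rw [show 1 - y / 3 = (3 - y) / 3 by ring]; field_simp; ring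
    _ ≤ 1 + y + y ^ 2 / (2 * (1 - l / 3)) := by gcongr; linarith

variable {Ω : Type*} [MeasurableSpace Ω] {μ : Measure Ω} {X : Ω → ℝ}

lemma mgf_le_exp_variance_mul_of_le_one [IsProbabilityMeasure μ] {θ : ℝ} (hX : MemLp X 2 μ)
    (hmean : μ[X] = 0) (hX_le : ∀ᵐ ω ∂μ, X ω ≤ 1) (hθ₀ : 0 ≤ θ) (hθ₃ : θ < 3) :
    mgf X μ θ ≤ Real.exp (Var[X; μ] * (θ ^ 2 / (2 * (1 - θ / 3)))) := by
  set c := θ ^ 2 / (2 * (1 - θ / 3)) with hc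
  have hlin : Integrable (fun ω => 1 + θ * X ω) μ :=
    (integrable_const 1).add ((hX.integrable one_le_two).const_mul θ)
  have hquad : Integrable (fun ω => c * X ω ^ 2) μ := hX.integrable_sq.const_mul c
  have hbound : ∀ᵐ ω ∂μ, Real.exp (θ * X ω) ≤ 1 + θ * X ω + c * X ω ^ 2 := by
    filter_upwards [hX_le] with ω hω
    refine (exp_le_one_add_add_sq_div hθ₃ (mul_le_of_le_one_right hθ₀ hω)).trans_eq ?_
    rw [hc]; ring
  calc mgf X μ θ ≤ ∫ ω, (1 + θ * X ω + c * X ω ^ 2) ∂μ :=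
        integral_mono_of_nonneg (.of_forall fun ω => (Real.exp_pos _).le) (hlin.add hquad) hbound
    _ = Var[X; μ] * c + 1 := by
        rw [integral_add hlin hquad,
          integral_add (integrable_const 1) ((hX.integrable one_le_two).const_mul θ),
          integral_const_mul, integral_const_mul, hmean,
          variance_of_integral_eq_zero hX.aemeasurable hmean, integral_const, probReal_univ]
        simp only [smul_eq_mul]; ring
    _ ≤ Real.exp (Var[X; μ] * c) := Real.add_one_le_exp _

lemma measureReal_ge_le_exp_of_mgf_le [IsFiniteMeasure μ] {v t : ℝ} (hv : 0 < v) (ht : 0 ≤ t)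
    (hint : ∀ θ, Integrable (fun ω => Real.exp (θ * X ω)) μ)
    (hmgf : ∀ θ, 0 ≤ θ → θ < 3 → mgf X μ θ ≤ Real.exp (v * (θ ^ 2 / (2 * (1 - θ / 3))))) :
    μ.real {ω | t ≤ X ω} ≤ Real.exp (-t ^ 2 / (2 * (v + t / 3))) := by
  -- For this `θ` the bound `v * (θ ^ 2 / (2 * (1 - θ / 3)))` on the log-mgf is half of `θ * t`.
  set θ := t / (v + t / 3) with hθ
  have hθ₀ : 0 ≤ θ := by positivity
  have hθ₃ : θ < 3 := by rw [hθ, div_lt_iff₀ (by positivity)]; linarith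
  have hone_sub : 1 - θ / 3 = v / (v + t / 3) := by rw [hθ]; field_simp; ring
  calc μ.real {ω | t ≤ X ω} ≤ Real.exp (-θ * t) * mgf X μ θ :=
        measure_ge_le_exp_mul_mgf t hθ₀ (hint θ)
    _ ≤ Real.exp (-θ * t) * Real.exp (v * (θ ^ 2 / (2 * (1 - θ / 3)))) := by
        gcongr; exact hmgf θ hθ₀ hθ₃
    _ = Real.exp (-t ^ 2 / (2 * (v + t / 3))) := by
        rw [← Real.exp_add, hone_sub, hθ]; congr 1; field_simp; ring

end Bernstein

section Digits

/-- The leading base-`B` digit of the fractional part of `x`. -/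
noncomputable def leadingDigit (B : ℕ) (x : ℝ) : ℕ := ⌊B * Int.fract x⌋₊

/-- The sum of the weights `φ` of the first `n` base-`B` digits of the fractional part of `x`. -/
noncomputable def digitSum (B : ℕ) (φ : ℕ → ℝ) (n : ℕ) (x : ℝ) : ℝ :=
  ∑ k ∈ Finset.range n, φ (leadingDigit B (B ^ k * x))

/-- The uniform probability measure on the unit interval, as a measure on `ℝ`. -/
noncomputable abbrev unitUniform : Measure ℝ := volume.restrict (Ioc 0 1)

instance : IsProbabilityMeasure unitUniform := ⟨by simp⟩

variable {B : ℕ} {φ : ℕ → ℝ}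

lemma leadingDigit_eq_iff (hB : 0 < B) {a : ℕ} {x : ℝ} :
    leadingDigit B x = a ↔ (a : ℝ) / B ≤ Int.fract x ∧ Int.fract x < ((a : ℝ) + 1) / B := by
  have hB' : (0 : ℝ) < B := by exact_mod_cast hB
  rw [leadingDigit, Nat.floor_eq_iff (by positivity), div_le_iff₀' hB', lt_div_iff₀' hB']

lemma leadingDigit_eq_of_mem_Ioo {d : ℕ} (hd : d < B) {x : ℝ}
    (hx : x ∈ Ioo ((d : ℝ) / B) (((d : ℝ) + 1) / B)) : leadingDigit B x = d := by
  have hB : 0 < B := Nat.zero_lt_of_lt hd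
  have hd_le : ((d : ℝ) + 1) / B ≤ 1 := by
    rw [div_le_one (by exact_mod_cast hB)]; exact_mod_cast hd
  have hfract : Int.fract x = x :=
    Int.fract_eq_self.2 ⟨le_trans (by positivity) hx.1.le, hx.2.trans_le hd_le⟩
  rw [leadingDigit_eq_iff hB, hfract]
  exact ⟨hx.1.le, hx.2⟩

lemma leadingDigit_lt (hB : 0 < B) (x : ℝ) : leadingDigit B x < B := by
  have hB' : (0 : ℝ) < B := by exact_mod_cast hB
  rw [leadingDigit, Nat.floor_lt (by positivity)]
  exact mul_lt_of_lt_one_right hB' (Int.fract_lt_one x)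

lemma leadingDigit_add_natCast (B : ℕ) (x : ℝ) (m : ℕ) :
    leadingDigit B (x + m) = leadingDigit B x := by
  simp [leadingDigit]

lemma measurable_leadingDigit (B : ℕ) : Measurable (leadingDigit B) :=
  Nat.measurable_floor.comp (measurable_fract.const_mul _)

lemma measurable_digitSum (B : ℕ) (φ : ℕ → ℝ) (n : ℕ) : Measurable (digitSum B φ n) :=
  Finset.measurable_fun_sum _ fun _ _ =>
    (measurable_from_nat (f := φ)).comp ((measurable_leadingDigit B).comp (measurable_const_mul _))

lemma periodic_digitSum (B : ℕ) (φ : ℕ → ℝ) (n : ℕ) : Function.Periodic (digitSum B φ n) 1 := by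
  refine fun x => Finset.sum_congr rfl fun k _ => ?_
  rw [mul_add, mul_one, ← Nat.cast_pow, leadingDigit_add_natCast]

lemma digitSum_succ (B : ℕ) (φ : ℕ → ℝ) (n : ℕ) (x : ℝ) :
    digitSum B φ (n + 1) x = φ (leadingDigit B x) + digitSum B φ n (B * x) := by
  rw [digitSum, Finset.sum_range_succ', add_comm, pow_zero, one_mul]
  simp only [digitSum, pow_succ, mul_assoc]

lemma digitSum_neg (B : ℕ) (φ : ℕ → ℝ) (n : ℕ) (x : ℝ) :
    digitSum B (-φ) n x = -digitSum B φ n x := by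
  simp [digitSum]

lemma abs_comp_leadingDigit_le (hB : 0 < B) (φ : ℕ → ℝ) (x : ℝ) :
    |φ (leadingDigit B x)| ≤ ∑ d ∈ Finset.range B, |φ d| :=
  Finset.single_le_sum (f := fun d => |φ d|) (fun _ _ => abs_nonneg _)
    (Finset.mem_range.2 (leadingDigit_lt hB x))

lemma abs_digitSum_le (hB : 0 < B) (φ : ℕ → ℝ) (n : ℕ) (x : ℝ) :
    |digitSum B φ n x| ≤ n * ∑ d ∈ Finset.range B, |φ d| :=
  calc |digitSum B φ n x| ≤ ∑ k ∈ Finset.range n, |φ (leadingDigit B (B ^ k * x))| :=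
        Finset.abs_sum_le_sum_abs _ _
    _ ≤ ∑ _k ∈ Finset.range n, ∑ d ∈ Finset.range B, |φ d| :=
        Finset.sum_le_sum fun _ _ => abs_comp_leadingDigit_le hB φ _
    _ = n * ∑ d ∈ Finset.range B, |φ d| := by simp

lemma integrable_exp_mul_digitSum (hB : 0 < B) (φ : ℕ → ℝ) (n : ℕ) (m θ : ℝ) :
    Integrable (fun x => Real.exp (θ * digitSum B φ n (m * x))) unitUniform :=
  integrable_exp_mul_of_mem_Icc
    ((measurable_digitSum B φ n).comp (measurable_const_mul m)).aemeasurable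
    (.of_forall fun x => abs_le.1 (abs_digitSum_le hB φ n (m * x)))

lemma memLp_comp_leadingDigit (hB : 0 < B) (φ : ℕ → ℝ) (p : ENNReal) :
    MemLp (fun x => φ (leadingDigit B x)) p unitUniform :=
  memLp_of_bounded (.of_forall fun x => abs_le.1 (abs_comp_leadingDigit_le hB φ x))
    ((measurable_from_nat (f := φ)).comp (measurable_leadingDigit B)).aestronglyMeasurable p

lemma integral_comp_leadingDigit_mul_comp_mul (hB : 0 < B) (φ : ℕ → ℝ) {g : ℝ → ℝ}
    (hg : Function.Periodic g 1) (hg_int : Integrable g unitUniform) :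
    ∫ x, φ (leadingDigit B x) * g (B * x) ∂unitUniform =
      (∑ d ∈ Finset.range B, φ d) / B * ∫ x, g x ∂unitUniform := by
  have hB' : (0 : ℝ) < B := by exact_mod_cast hB
  have hg_ii : ∀ c d, IntervalIntegrable g volume c d :=
    hg.intervalIntegrable₀ one_ne_zero
      ((intervalIntegrable_iff_integrableOn_Ioc_of_le zero_le_one).2 hg_int)
  let c (d : ℕ) : ℝ := d / B
  have hdigit {d : ℕ} (hd : d < B) :
      EqOn (fun x => φ d * g (B * x)) (fun x => φ (leadingDigit B x) * g (B * x))
        (uIoo (c d) (c (d + 1))) := by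
    intro x hx
    rw [uIoo_of_le (by simp only [c]; gcongr; simp)] at hx
    simp only [c, Nat.cast_succ] at hx
    simp only [leadingDigit_eq_of_mem_Ioo hd hx]
  have hcell {d : ℕ} (hd : d < B) :
      ∫ x in c d..c (d + 1), φ (leadingDigit B x) * g (B * x) =
        φ d * ((B : ℝ)⁻¹ * ∫ x in (0 : ℝ)..1, g x) := by
    rw [← intervalIntegral.integral_congr_uIoo (hdigit hd), intervalIntegral.integral_const_mul,
      intervalIntegral.integral_comp_mul_left _ hB'.ne', mul_div_cancel₀ _ hB'.ne',
      mul_div_cancel₀ _ hB'.ne', Nat.cast_succ, hg.intervalIntegral_add_eq d 0, zero_add,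
      smul_eq_mul]
  have hcell_int (d : ℕ) (hd : d < B) :
      IntervalIntegrable (fun x => φ (leadingDigit B x) * g (B * x)) volume (c d) (c (d + 1)) :=
    (((hg_ii _ _).comp_mul_left (c := B)).const_mul (φ d)).congr_uIoo (hdigit hd)
  have hsum := intervalIntegral.sum_integral_adjacent_intervals hcell_int
  rw [Finset.sum_congr rfl fun d hd => hcell (Finset.mem_range.1 hd), ← Finset.sum_mul] at hsum
  rw [← intervalIntegral.integral_of_le zero_le_one, ← intervalIntegral.integral_of_le zero_le_one,
    div_mul_eq_mul_div, mul_div_assoc, div_eq_inv_mul, hsum]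
  simp [c, hB'.ne']

lemma integral_comp_leadingDigit (hB : 0 < B) (φ : ℕ → ℝ) :
    ∫ x, φ (leadingDigit B x) ∂unitUniform = (∑ d ∈ Finset.range B, φ d) / B := by
  simpa using integral_comp_leadingDigit_mul_comp_mul hB φ (g := fun _ => 1) (fun _ => rfl)
    (integrable_const 1)

lemma integral_comp_natCast_mul {m : ℕ} (hm : 0 < m) {g : ℝ → ℝ} (hg : Function.Periodic g 1)
    (hg_int : Integrable g unitUniform) :
    ∫ x, g (m * x) ∂unitUniform = ∫ x, g x ∂unitUniform := by
  simpa [hm.ne'] using integral_comp_leadingDigit_mul_comp_mul hm (fun _ => 1) hg hg_int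

lemma mgf_digitSum (hB : 0 < B) (φ : ℕ → ℝ) (n : ℕ) (θ : ℝ) :
    mgf (digitSum B φ n) unitUniform θ =
      mgf (fun x => φ (leadingDigit B x)) unitUniform θ ^ n := by
  induction n with
  | zero => simp [mgf, digitSum]
  | succ n ih =>
    have hper : Function.Periodic (fun x => Real.exp (θ * digitSum B φ n x)) 1 :=
      (periodic_digitSum B φ n).comp fun y => Real.exp (θ * y)
    have hint : Integrable (fun x => Real.exp (θ * digitSum B φ n x)) unitUniform := by
      simpa using integrable_exp_mul_digitSum hB φ n 1 θ
    calc mgf (digitSum B φ (n + 1)) unitUniform θ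
        = ∫ x, Real.exp (θ * φ (leadingDigit B x)) *
            Real.exp (θ * digitSum B φ n (B * x)) ∂unitUniform := by
          simp only [mgf, digitSum_succ, mul_add, Real.exp_add]
      _ = (∫ x, Real.exp (θ * φ (leadingDigit B x)) ∂unitUniform) *
            mgf (digitSum B φ n) unitUniform θ := by
          rw [integral_comp_leadingDigit_mul_comp_mul hB (fun d => Real.exp (θ * φ d)) hper hint,
            integral_comp_leadingDigit hB fun d => Real.exp (θ * φ d)]
          rfl
      _ = mgf (fun x => φ (leadingDigit B x)) unitUniform θ ^ (n + 1) := by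
          rw [ih, pow_succ']; rfl

lemma mgf_digitSum_comp_mul {m : ℕ} (hB : 0 < B) (hm : 0 < m) (φ : ℕ → ℝ) (n : ℕ) (θ : ℝ) :
    mgf (fun x => digitSum B φ n (m * x)) unitUniform θ =
      mgf (fun x => φ (leadingDigit B x)) unitUniform θ ^ n := by
  rw [← mgf_digitSum hB]
  exact integral_comp_natCast_mul (g := fun x => Real.exp (θ * digitSum B φ n x)) hm
    ((periodic_digitSum B φ n).comp fun y => Real.exp (θ * y))
    (by simpa using integrable_exp_mul_digitSum hB φ n 1 θ)

lemma variance_comp_leadingDigit (hB : 0 < B) (hφ₀ : ∑ d ∈ Finset.range B, φ d = 0) :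
    Var[fun x => φ (leadingDigit B x); unitUniform] = (∑ d ∈ Finset.range B, φ d ^ 2) / B := by
  have hmean : ∫ x, φ (leadingDigit B x) ∂unitUniform = 0 := by
    rw [integral_comp_leadingDigit hB, hφ₀, zero_div]
  rw [variance_of_integral_eq_zero (memLp_comp_leadingDigit hB φ 1).aemeasurable hmean,
    integral_comp_leadingDigit hB fun d => φ d ^ 2]

lemma unitUniform_real_digitSum_ge_le {m n : ℕ} (hB : 0 < B) (hm : 0 < m) (hn : 0 < n)
    (hφ₀ : ∑ d ∈ Finset.range B, φ d = 0) (hφ₁ : ∀ d, φ d ≤ 1)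
    (hvar : 0 < (∑ d ∈ Finset.range B, φ d ^ 2) / B) {t : ℝ} (ht : 0 ≤ t) :
    unitUniform.real {x | t ≤ digitSum B φ n (m * x)} ≤
      Real.exp (-t ^ 2 / (2 * (n * ((∑ d ∈ Finset.range B, φ d ^ 2) / B) + t / 3))) := by
  refine measureReal_ge_le_exp_of_mgf_le (mul_pos (by exact_mod_cast hn) hvar) ht
    (integrable_exp_mul_digitSum hB φ n m) fun θ hθ₀ hθ₃ => ?_
  have hmean : ∫ x, φ (leadingDigit B x) ∂unitUniform = 0 := by
    rw [integral_comp_leadingDigit hB, hφ₀, zero_div]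
  rw [mgf_digitSum_comp_mul hB hm, mul_assoc, Real.exp_nat_mul, ← variance_comp_leadingDigit hB hφ₀]
  exact pow_le_pow_left₀ mgf_nonneg
    (mgf_le_exp_variance_mul_of_le_one (memLp_comp_leadingDigit hB φ 2) hmean
      (.of_forall fun _ => hφ₁ _) hθ₀ hθ₃) n

lemma unitUniform_real_abs_digitSum_ge_le {m n : ℕ} (hB : 0 < B) (hm : 0 < m) (hn : 0 < n)
    (hφ₀ : ∑ d ∈ Finset.range B, φ d = 0) (hφ₁ : ∀ d, |φ d| ≤ 1)
    (hvar : 0 < (∑ d ∈ Finset.range B, φ d ^ 2) / B) {t : ℝ} (ht : 0 ≤ t) :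
    unitUniform.real {x | t ≤ |digitSum B φ n (m * x)|} ≤
      2 * Real.exp (-t ^ 2 / (2 * (n * ((∑ d ∈ Finset.range B, φ d ^ 2) / B) + t / 3))) := by
  have hunion : {x | t ≤ |digitSum B φ n (m * x)|} =
      {x | t ≤ digitSum B φ n (m * x)} ∪ {x | t ≤ digitSum B (-φ) n (m * x)} := by
    ext x; simp only [mem_ofPred_eq, mem_union, le_abs, digitSum_neg]
  have hpos := unitUniform_real_digitSum_ge_le hB hm hn hφ₀ (fun d => (abs_le.1 (hφ₁ d)).2) hvar ht
  have hneg := unitUniform_real_digitSum_ge_le (φ := -φ) hB hm hn (by simp [hφ₀])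
    (fun d => neg_le.1 (abs_le.1 (hφ₁ d)).1) (by simpa using hvar) ht
  simp only [Pi.neg_apply, neg_sq] at hneg
  rw [hunion, two_mul]
  exact (measureReal_union_le _ _).trans (add_le_add hpos hneg)

end Digits

section ResidueClasses

/-- The number of `j < N` with `j ≡ i [MOD h]`, for a residue `i < h`. -/
def residueCount (h N i : ℕ) : ℕ := N / h + if i < N % h then 1 else 0

variable {h : ℕ}

lemma sum_range_mul_eq_sum_sum {R : Type*} [AddCommMonoid R] (h q : ℕ) (z : ℕ → R) :
    ∑ j ∈ Finset.range (h * q), z j =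
      ∑ i ∈ Finset.range h, ∑ k ∈ Finset.range q, z (i + h * k) := by
  induction q with
  | zero => simp
  | succ q ih =>
    simp only [Nat.mul_succ, Finset.sum_range_add, ih, Finset.sum_range_succ,
      Finset.sum_add_distrib, add_comm _ (h * q)]

lemma sum_range_eq_sum_residueCount {R : Type*} [AddCommMonoid R] (hh : 0 < h) (N : ℕ)
    (z : ℕ → R) :
    ∑ j ∈ Finset.range N, z j =
      ∑ i ∈ Finset.range h, ∑ k ∈ Finset.range (residueCount h N i), z (i + h * k) := by
  have hremainder : ∑ i ∈ Finset.range (N % h), z (h * (N / h) + i) =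
      ∑ i ∈ Finset.range h, if i < N % h then z (i + h * (N / h)) else 0 := by
    have hfilter : (Finset.range h).filter (· < N % h) = Finset.range (N % h) := by
      have := Nat.mod_lt N hh
      ext i; simp only [Finset.mem_filter, Finset.mem_range]; omega
    simp only [← Finset.sum_filter, hfilter, add_comm]
  conv_lhs => rw [← Nat.div_add_mod N h]
  rw [Finset.sum_range_add, sum_range_mul_eq_sum_sum, hremainder, ← Finset.sum_add_distrib]
  refine Finset.sum_congr rfl fun i _ => ?_
  rw [residueCount]
  split_ifs
  · rw [Finset.sum_range_succ]
  · rw [add_zero, add_zero]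

lemma sum_residueCount (hh : 0 < h) (N : ℕ) :
    ∑ i ∈ Finset.range h, residueCount h N i = N := by
  have hcount := (sum_range_eq_sum_residueCount hh N fun _ => (1 : ℕ)).symm
  simpa only [Finset.sum_const, Finset.card_range, smul_eq_mul, mul_one] using hcount

lemma sum_sqrt_residueCount_le (hh : 0 < h) (N : ℕ) :
    ∑ i ∈ Finset.range h, √(residueCount h N i) ≤ √(h * N) := by
  have := Real.sum_sqrt_mul_sqrt_le (Finset.range h) (f := fun _ => 1)
    (g := fun i => (residueCount h N i : ℝ)) (fun _ => zero_le_one) fun _ => Nat.cast_nonneg _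
  rwa [← Nat.cast_sum, sum_residueCount hh, Finset.sum_const, Finset.card_range, nsmul_one,
    ← Real.sqrt_mul (Nat.cast_nonneg h), Real.sqrt_one, ← Finset.mul_sum, one_mul] at this

end ResidueClasses

section PeriodicSets

variable {E : Set ℝ} {T : ℝ}

lemma measureReal_inter_Ioc_add_natCast_mul (hE : MeasurableSet E)
    (hper : Function.Periodic (· ∈ E) T) (hT : 0 < T) (c : ℝ) (n : ℕ) :
    volume.real (E ∩ Ioc c (c + n * T)) = n * volume.real (E ∩ Ioc 0 T) := by
  have hper' : Function.Periodic (E.indicator (1 : ℝ → ℝ)) T := fun x => by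
    have hmem : (x + T ∈ E) = (x ∈ E) := hper x
    simp only [indicator, Pi.one_apply, hmem]
  have hintegral {u v : ℝ} (huv : u ≤ v) :
      ∫ x in u..v, E.indicator 1 x = volume.real (E ∩ Ioc u v) := by
    rw [intervalIntegral.integral_of_le huv, integral_indicator_one hE,
      measureReal_restrict_apply hE]
  have hint (u v : ℝ) : IntervalIntegrable (E.indicator (1 : ℝ → ℝ)) volume u v :=
    intervalIntegrable_iff.2 <|
      Integrable.indicator (intervalIntegrable_iff.1 (intervalIntegrable_const (c := (1 : ℝ)))) hE
  have := hper'.intervalIntegral_add_zsmul_eq n c hint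
  rw [hper'.intervalIntegral_add_eq c 0, zero_add, natCast_zsmul, natCast_zsmul, nsmul_eq_mul,
    nsmul_eq_mul] at this
  rwa [hintegral (le_add_of_nonneg_right (by positivity)), hintegral hT.le] at this

lemma measureReal_inter_Ioc_le_of_periodic (hE : MeasurableSet E)
    (hper : Function.Periodic (· ∈ E) T) (hT : 0 < T) {c d : ℝ} (hcd : c ≤ d) :
    volume.real (E ∩ Ioc c d) ≤ (d - c + T) * (volume.real (E ∩ Ioc 0 T) / T) := by
  set n := ⌈(d - c) / T⌉₊
  have hd : d ≤ c + n * T := by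
    have := (div_le_iff₀ hT).1 (Nat.le_ceil ((d - c) / T))
    linarith
  calc volume.real (E ∩ Ioc c d) ≤ volume.real (E ∩ Ioc c (c + n * T)) :=
        measureReal_mono (inter_subset_inter_right E (Ioc_subset_Ioc_right hd))
          (measure_inter_lt_top_of_right_ne_top measure_Ioc_lt_top.ne).ne
    _ = n * volume.real (E ∩ Ioc 0 T) := measureReal_inter_Ioc_add_natCast_mul hE hper hT c n
    _ ≤ ((d - c) / T + 1) * volume.real (E ∩ Ioc 0 T) := by
        gcongr
        exact (Nat.ceil_lt_add_one (div_nonneg (sub_nonneg.2 hcd) hT.le)).le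
    _ = (d - c + T) * (volume.real (E ∩ Ioc 0 T) / T) := by field_simp

lemma exists_Ioo_subset_subset_Icc_of_ordConnected {A : Set ℝ} (hA : A.OrdConnected)
    (hb : Bornology.IsBounded A) : ∃ c d, c ≤ d ∧ Ioo c d ⊆ A ∧ A ⊆ Icc c d := by
  rcases A.eq_empty_or_nonempty with rfl | hne
  · exact ⟨0, 0, le_rfl, by simp, empty_subset _⟩
  · exact ⟨sInf A, sSup A, Real.sInf_le_sSup A hb.bddBelow hb.bddAbove,
      IsConnected.Ioo_csInf_csSup_subset ⟨hne, hA.isPreconnected⟩ hb.bddBelow hb.bddAbove,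
      hb.subset_Icc_sInf_sSup⟩

lemma measureReal_inter_le_of_periodic {m : ℕ} (hE : MeasurableSet E)
    (hper : Function.Periodic (· ∈ E) (m : ℝ)⁻¹) (hm : 0 < m) {A : Set ℝ}
    (hA : A.OrdConnected) (hb : Bornology.IsBounded A) :
    volume.real (A ∩ E) ≤ (volume.real A + (m : ℝ)⁻¹) * unitUniform.real E := by
  obtain ⟨c, d, hcd, hIoo, hIcc⟩ := exists_Ioo_subset_subset_Icc_of_ordConnected hA hb
  have hT : 0 < (m : ℝ)⁻¹ := by positivity
  have hdensity : unitUniform.real E = volume.real (E ∩ Ioc 0 (m : ℝ)⁻¹) / (m : ℝ)⁻¹ := by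
    have := measureReal_inter_Ioc_add_natCast_mul hE hper hT 0 m
    rw [zero_add, mul_inv_cancel₀ (by positivity)] at this
    rw [measureReal_restrict_apply hE, this, div_inv_eq_mul, mul_comm]
  have hlength : d - c ≤ volume.real A := by
    rw [← Real.volume_real_Ioo_of_le hcd]
    exact measureReal_mono hIoo hb.measure_lt_top.ne
  calc volume.real (A ∩ E) ≤ volume.real (E ∩ Icc c d) :=
        measureReal_mono (fun x hx => ⟨hx.2, hIcc hx.1⟩)
          (measure_inter_lt_top_of_right_ne_top measure_Icc_lt_top.ne).ne
    _ = volume.real (E ∩ Ioc c d) :=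
        measureReal_congr ((ae_eq_refl E).inter Ioc_ae_eq_Icc.symm)
    _ ≤ (d - c + (m : ℝ)⁻¹) * unitUniform.real E :=
        hdensity ▸ measureReal_inter_Ioc_le_of_periodic hE hper hT hcd
    _ ≤ (volume.real A + (m : ℝ)⁻¹) * unitUniform.real E := by gcongr

end PeriodicSets

section Discrepancy

/-- The indicator of the digit `a`, centered to have mean zero over the base-`B` digits. -/
noncomputable def centeredIndicator (B a : ℕ) (d : ℕ) : ℝ := (if d = a then 1 else 0) - (B : ℝ)⁻¹

section CenteredIndicator

variable {B a : ℕ}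

lemma abs_centeredIndicator_le (B a d : ℕ) : |centeredIndicator B a d| ≤ 1 := by
  have hinv_le : (B : ℝ)⁻¹ ≤ 1 := Nat.cast_inv_le_one B
  have hinv_nonneg : 0 ≤ (B : ℝ)⁻¹ := by positivity
  rw [centeredIndicator, abs_le]
  split_ifs <;> constructor <;> linarith

lemma sum_centeredIndicator (ha : a < B) : ∑ d ∈ Finset.range B, centeredIndicator B a d = 0 := by
  have hB : (B : ℝ) ≠ 0 := by exact_mod_cast (Nat.zero_lt_of_lt ha).ne'
  simp [centeredIndicator, ha, hB]

lemma sum_centeredIndicator_sq_div (ha : a < B) :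
    (∑ d ∈ Finset.range B, centeredIndicator B a d ^ 2) / B = (B : ℝ)⁻¹ * (1 - (B : ℝ)⁻¹) := by
  have hB : (B : ℝ) ≠ 0 := by exact_mod_cast (Nat.zero_lt_of_lt ha).ne'
  have hsq (d : ℕ) : centeredIndicator B a d ^ 2 =
      (1 - 2 * (B : ℝ)⁻¹) * (if d = a then 1 else 0) + (B : ℝ)⁻¹ ^ 2 := by
    rw [centeredIndicator]; split_ifs <;> ring
  simp only [hsq, Finset.sum_add_distrib, ← Finset.mul_sum, Finset.sum_ite_eq', Finset.mem_range,
    if_pos ha, Finset.sum_const, Finset.card_range, nsmul_eq_mul]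
  field_simp; ring

end CenteredIndicator

lemma exp_neg_sq_div_mul_sqrt_le {v ε : ℝ} (hv : 0 < v) (hε : 0 ≤ ε) {q n : ℕ} (hq : 0 < q)
    (hqn : q ≤ n) :
    Real.exp (-(ε * √n) ^ 2 / (2 * (n * v + ε * √n / 3))) ≤
      Real.exp (-ε ^ 2 / (2 * v + 2 / 3 * ε / √q)) := by
  have hn : (0 : ℝ) < n := by exact_mod_cast hq.trans_le hqn
  have hcancel : -(ε * √n) ^ 2 / (2 * (n * v + ε * √n / 3)) =
      -(ε ^ 2 / (2 * v + 2 / 3 * ε / √n)) := by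
    have hs : 0 < √(n : ℝ) := Real.sqrt_pos.2 hn
    nth_rewrite 2 [← Real.sq_sqrt hn.le]
    generalize √(n : ℝ) = s at hs
    field_simp
  rw [hcancel, neg_div]
  gcongr

lemma unitUniform_real_mul_sqrt_le_abs_digitSum_centeredIndicator_le {B a m q n : ℕ} (hB : 1 < B)
    (ha : a < B) (hm : 0 < m) (hq : 0 < q) (hqn : q ≤ n) {ε : ℝ} (hε : 0 ≤ ε) :
    unitUniform.real {x | ε * √n ≤ |digitSum B (centeredIndicator B a) n (m * x)|} ≤
      2 * Real.exp (-ε ^ 2 / (2 * ((B : ℝ)⁻¹ * (1 - (B : ℝ)⁻¹)) + 2 / 3 * ε / √q)) := by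
  have hB₀ : 0 < B := by omega
  have hvar : 0 < (B : ℝ)⁻¹ * (1 - (B : ℝ)⁻¹) :=
    mul_pos (by positivity) (sub_pos.2 (inv_lt_one_of_one_lt₀ (by exact_mod_cast hB)))
  have hbernstein := unitUniform_real_abs_digitSum_ge_le hB₀ hm (hq.trans_le hqn)
    (sum_centeredIndicator ha) (abs_centeredIndicator_le B a)
    (by rwa [sum_centeredIndicator_sq_div ha]) (t := ε * √n) (by positivity)
  rw [sum_centeredIndicator_sq_div ha] at hbernstein
  exact hbernstein.trans
    (mul_le_mul_of_nonneg_left (exp_neg_sq_div_mul_sqrt_le hvar hε hq hqn) zero_le_two)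

variable {b h N : ℕ}

lemma measurable_F_bseq (b M N : ℕ) (α₁ α₂ : ℝ) : Measurable fun x => F M N α₁ α₂ (bseq b x) := by
  simp only [F, Finset.natCast_card_filter]
  have hbseq (j : ℕ) : Measurable fun x => bseq b x j :=
    measurable_fract.comp (measurable_const_mul _)
  refine (Measurable.sub_const (Finset.measurable_fun_sum _ fun j _ =>
    Measurable.ite ?_ measurable_const measurable_const) _).abs
  exact (measurableSet_le measurable_const (hbseq j)).inter
    (measurableSet_lt (hbseq j) measurable_const)

lemma bseq_add_inv_pow (hb : 0 < b) {j₀ j : ℕ} (hj : j₀ ≤ j) (x : ℝ) :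
    bseq b (x + ((b : ℝ) ^ j₀)⁻¹) j = bseq b x j := by
  have hshift : (b : ℝ) ^ j * ((b : ℝ) ^ j₀)⁻¹ = (b ^ (j - j₀) : ℕ) := by
    rw [Nat.cast_pow, pow_sub₀ _ (by positivity) hj]
  rw [bseq, bseq, mul_add, hshift, Int.fract_add_natCast]

lemma periodic_F_bseq (hb : 0 < b) (M N j₀ : ℕ) (α₁ α₂ : ℝ) :
    Function.Periodic (fun x => F (M + j₀) N α₁ α₂ (bseq b x)) ((b : ℝ) ^ j₀)⁻¹ := by
  intro x
  simp only [F]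
  rw [Finset.filter_congr fun j hj => by
    rw [bseq_add_inv_pow hb (le_of_add_le_right (Finset.mem_Ico.1 hj).1)]]

lemma F_bseq_eq_abs_sum_leadingDigit (hb : 0 < b) (h K N a : ℕ) (x : ℝ) :
    F K N ((a : ℝ) / (b : ℝ) ^ h) (((a : ℝ) + 1) / (b : ℝ) ^ h) (bseq b x) =
      |∑ j ∈ Finset.range N,
        centeredIndicator (b ^ h) a (leadingDigit (b ^ h) ((b : ℝ) ^ (K + j) * x))| := by
  rw [F, Finset.natCast_card_filter, Finset.sum_Ico_eq_sum_range]
  simp only [bseq, centeredIndicator, leadingDigit_eq_iff (Nat.pow_pos hb), Nat.cast_pow,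
    Finset.sum_sub_distrib, add_tsub_cancel_left, Finset.sum_const, Finset.card_range,
    nsmul_eq_mul]
  ring_nf

-- Since `b ^ (K + i + h * k) = (b ^ h) ^ k * b ^ (K + i)`, the times `j ≡ i [MOD h]` read off
-- successive base-`b ^ h` digits of `b ^ (K + i) * x`.
lemma F_bseq_eq_abs_sum_digitSum (hb : 0 < b) (hh : 0 < h) (K N a : ℕ) (x : ℝ) :
    F K N ((a : ℝ) / (b : ℝ) ^ h) (((a : ℝ) + 1) / (b : ℝ) ^ h) (bseq b x) =
      |∑ i ∈ Finset.range h, digitSum (b ^ h) (centeredIndicator (b ^ h) a) (residueCount h N i)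
        ((b ^ (K + i) : ℕ) * x)| := by
  rw [F_bseq_eq_abs_sum_leadingDigit hb, sum_range_eq_sum_residueCount hh]
  simp only [digitSum, Nat.cast_pow, ← mul_assoc, ← pow_mul, ← pow_add, ← add_assoc,
    add_comm _ (h * _)]

lemma exists_mul_sqrt_residueCount_le_abs_digitSum (hb : 0 < b) (hh : 0 < h) {ε : ℝ} (hε : 0 ≤ ε)
    {K a : ℕ} {x : ℝ} (hx : ε * √(h * N) <
      F K N ((a : ℝ) / (b : ℝ) ^ h) (((a : ℝ) + 1) / (b : ℝ) ^ h) (bseq b x)) :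
    ∃ i ∈ Finset.range h, ε * √(residueCount h N i) ≤
      |digitSum (b ^ h) (centeredIndicator (b ^ h) a) (residueCount h N i)
        ((b ^ (K + i) : ℕ) * x)| := by
  rw [F_bseq_eq_abs_sum_digitSum hb hh] at hx
  have hsum := calc ∑ i ∈ Finset.range h, ε * √(residueCount h N i)
        = ε * ∑ i ∈ Finset.range h, √(residueCount h N i) := by rw [Finset.mul_sum]
    _ ≤ ε * √(h * N) := mul_le_mul_of_nonneg_left (sum_sqrt_residueCount_le hh N) hε
    _ < _ := hx
    _ ≤ _ := Finset.abs_sum_le_sum_abs _ _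
  obtain ⟨i, hi, hlt⟩ := Finset.exists_lt_of_sum_lt hsum
  exact ⟨i, hi, hlt.le⟩

lemma unitUniform_real_lt_F_bseq_le (hb : 2 ≤ b) (hh : 0 < h) (hN : h ≤ N) {ε : ℝ} (hε : 0 ≤ ε)
    (K : ℕ) {a : ℕ} (ha : a < b ^ h) :
    unitUniform.real {x | ε * √(h * N) <
        F K N ((a : ℝ) / (b : ℝ) ^ h) (((a : ℝ) + 1) / (b : ℝ) ^ h) (bseq b x)} ≤
      2 * h * Real.exp (-ε ^ 2 / (2 * ((b : ℝ) ^ h)⁻¹ * (1 - ((b : ℝ) ^ h)⁻¹) +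
        2 / 3 * ε / √(N / h : ℕ))) := by
  have hb₀ : 0 < b := by omega
  have hB : 1 < b ^ h := Nat.one_lt_pow hh.ne' hb
  set R := Real.exp (-ε ^ 2 / (2 * ((b : ℝ) ^ h)⁻¹ * (1 - ((b : ℝ) ^ h)⁻¹) +
    2 / 3 * ε / √(N / h : ℕ))) with hR
  set exceeds : ℕ → Set ℝ := fun i => {x | ε * √(residueCount h N i) ≤
    |digitSum (b ^ h) (centeredIndicator (b ^ h) a) (residueCount h N i) ((b ^ (K + i) : ℕ) * x)|}
  have hexceeds (i : ℕ) : unitUniform.real (exceeds i) ≤ 2 * R := by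
    rw [hR, mul_assoc 2 ((b : ℝ) ^ h)⁻¹, ← Nat.cast_pow]
    exact unitUniform_real_mul_sqrt_le_abs_digitSum_centeredIndicator_le hB ha (Nat.pow_pos hb₀)
      (Nat.div_pos hN hh) (Nat.le_add_right _ _) hε
  calc _ ≤ unitUniform.real (⋃ i ∈ Finset.range h, exceeds i) :=
        measureReal_mono (fun x hx =>
          let ⟨i, hi, hle⟩ := exists_mul_sqrt_residueCount_le_abs_digitSum hb₀ hh hε hx
          mem_iUnion₂.2 ⟨i, hi, hle⟩) (measure_ne_top _ _)
    _ ≤ ∑ i ∈ Finset.range h, unitUniform.real (exceeds i) := measureReal_biUnion_finset_le _ _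
    _ ≤ ∑ _i ∈ Finset.range h, 2 * R := Finset.sum_le_sum fun i _ => hexceeds i
    _ = 2 * h * R := by simp only [Finset.sum_const, Finset.card_range, nsmul_eq_mul]; ring

end Discrepancy

theorem stmt3_general (b h N : ℕ) (hb : 2 ≤ b) (hh : 1 ≤ h) (hN : h ≤ N)
    (ε : ℝ) (hε : 0 ≤ ε) (M a : ℕ) (ha : a < b ^ h)
    (A : Set ℝ) (hA : Bornology.IsBounded A) (hA' : A.OrdConnected) (j₀ : ℕ) :
    MeasureTheory.volume {x ∈ A |
        ε * Real.sqrt ((h : ℝ) * N) <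
          F (M + j₀) N ((a : ℝ) / (b : ℝ) ^ h) (((a : ℝ) + 1) / (b : ℝ) ^ h) (bseq b x)} ≤
      ENNReal.ofReal (2 * (MeasureTheory.volume A).toReal * h * Real.exp (-ε ^ 2 /
          (2 * ((b : ℝ) ^ h)⁻¹ * (1 - ((b : ℝ) ^ h)⁻¹) +
            2 / 3 * ε / Real.sqrt ((N / h : ℕ) : ℝ))) +
        ((b : ℝ) ^ j₀)⁻¹) := by
  set E := {x | ε * √(h * N) <
    F (M + j₀) N ((a : ℝ) / (b : ℝ) ^ h) (((a : ℝ) + 1) / (b : ℝ) ^ h) (bseq b x)}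
  set R := Real.exp (-ε ^ 2 / (2 * ((b : ℝ) ^ h)⁻¹ * (1 - ((b : ℝ) ^ h)⁻¹) +
    2 / 3 * ε / √(N / h : ℕ)))
  have hb₀ : 0 < b := by omega
  have hE : MeasurableSet E := measurableSet_lt measurable_const (measurable_F_bseq ..)
  have hper : Function.Periodic (· ∈ E) ((b ^ j₀ : ℕ) : ℝ)⁻¹ := by
    rw [Nat.cast_pow]
    exact (periodic_F_bseq hb₀ M N j₀ _ _).comp (ε * √(h * N) < ·)
  have htail : unitUniform.real E ≤ 2 * h * R :=
    unitUniform_real_lt_F_bseq_le hb hh hN hε (M + j₀) ha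
  refine ENNReal.le_ofReal_iff_toReal_le ?_ (by positivity) |>.2 ?_
  · exact measure_ne_top_of_subset (sep_subset A _) hA.measure_lt_top.ne
  calc volume.real (A ∩ E) ≤ (volume.real A + ((b : ℝ) ^ j₀)⁻¹) * unitUniform.real E := by
        exact_mod_cast measureReal_inter_le_of_periodic hE hper (Nat.pow_pos hb₀) hA' hA
    _ = volume.real A * unitUniform.real E + ((b : ℝ) ^ j₀)⁻¹ * unitUniform.real E := add_mul ..
    _ ≤ volume.real A * (2 * h * R) + ((b : ℝ) ^ j₀)⁻¹ * 1 := by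
        gcongr; exact measureReal_le_one
    _ = 2 * volume.real A * h * R + ((b : ℝ) ^ j₀)⁻¹ := by ring

theorem stmt3 (b h N : ℕ) (hb : 2 ≤ b) (hh : 1 ≤ h) (hN : h ≤ N)
    (ε : ℝ) (hε : 0 < ε) (M a : ℕ) (ha : a < b ^ h)
    (A : Set ℝ) (hA : A ⊆ Set.Icc (0 : ℝ) 1) (hA' : A.OrdConnected)
    (j₀ : ℕ) (hj₀ : 1 ≤ j₀) :
    MeasureTheory.volume {x ∈ A |
        ε * Real.sqrt ((h : ℝ) * N) <
          F (M + j₀) N ((a : ℝ) / (b : ℝ) ^ h) (((a : ℝ) + 1) / (b : ℝ) ^ h) (bseq b x)} ≤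
      ENNReal.ofReal (2 * (MeasureTheory.volume A).toReal * h * Real.exp (-ε ^ 2 /
          (2 * ((b : ℝ) ^ h)⁻¹ * (1 - ((b : ℝ) ^ h)⁻¹) +
            2 / 3 * ε / Real.sqrt ((N / h : ℕ) : ℝ))) +
        2 * ((b : ℝ) ^ j₀)⁻¹) := by
  exact (stmt3_general b h N hb hh hN ε hε.le M a ha A ((Metric.isBounded_Icc 0 1).subset hA) hA'
    j₀).trans (by gcongr; exact le_mul_of_one_le_left (by positivity) one_le_two)
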